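/- There exist absolute constants c₀, c₁, c₂ > 0 such that the following holds. Let N, m be positive integers, ρ > 0, and 1 ≤ p < ∞. Let T = {x ∈ ℝ^N : ‖x‖_{ℓ2} = 1 and ‖x‖_{ℓ1} ≤ ρ⁻¹}, and let w(T) = E[sup_{x∈T}⟨g, x⟩], where g is a standard Gaussian vector in ℝ^N (i.i.d. N(0,1) coordinates). If m ≥ c₀·w(T)², then a random m × N matrix Φ whose entries are i.i.d. N(0,1) satisfies the (p, ρ, c₁·m^{1/p})-robust width property over B_{ℓ1} with probability at least 1 − 2e^{−c₂ m}. -/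

import Mathlib

open MeasureTheory ProbabilityTheory Finset

/-- The ℓp norm of a vector in ℝ^m, for real `p`. -/
noncomputable def lpNorm {m : ℕ} (p : ℝ) (u : Fin m → ℝ) : ℝ :=
  (∑ i, |u i| ^ p) ^ (1 / p)

/-- The ℓ1 norm of a vector in ℝ^N. -/
noncomputable def l1Norm {N : ℕ} (v : Fin N → ℝ) : ℝ :=
  ∑ j, |v j|

/-- The ℓ2 norm of a vector in ℝ^N. -/
noncomputable def l2Norm {N : ℕ} (v : Fin N → ℝ) : ℝ :=
  Real.sqrt (∑ j, (v j) ^ 2)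

/-- The law of a standard Gaussian vector in ℝ^N (i.i.d. N(0,1) coordinates). -/
noncomputable def stdGaussianVec (N : ℕ) : Measure (Fin N → ℝ) :=
  Measure.pi fun _ => gaussianReal 0 1

/-- The law of an m × N standard Gaussian matrix (i.i.d. N(0,1) entries). -/
noncomputable def stdGaussianMatrix (m N : ℕ) : Measure (Fin m → Fin N → ℝ) :=
  Measure.pi fun _ => stdGaussianVec N

/-- The Gaussian width of a set T ⊆ ℝ^N. -/
noncomputable def gaussianWidth {N : ℕ} (T : Set (Fin N → ℝ)) : ℝ :=
  ∫ g, sSup ((fun x : Fin N → ℝ => ∑ j, g j * x j) '' T) ∂(stdGaussianVec N)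

/-!
Write `T` for the unit vectors with `‖x‖₁ ≤ ρ⁻¹`, `ψ u = min |u| 1`, and `c = E ψ(g)` for a
standard normal `g`. By homogeneity and the power mean inequality it suffices that
`∑ i, |⟨Φ i, x⟩| ≥ c m / 2` for all `x ∈ T`, where `Φ i` are the rows of `Φ`, and this follows from
`Z < c m / 2` for `Z = sup_{x ∈ T} ∑ i, (c - ψ ⟨Φ i, x⟩)`.

Because `ψ` takes values in `[0, 1]`, resampling one row changes `Z` by at most `1`, and McDiarmid's
inequality gives `P (Z ≥ E Z + c m / 4) ≤ exp (-c² m / 8)`. Because `ψ` is a contraction,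
symmetrization, row by row, bounds `E Z` by `2 E sup_{x ∈ T} ⟨∑ i, Φ i, x⟩`. The sum of the `m` rows
is distributed as `√m` times a single row, so this is `2 √m w(T)`, which is at most `c m / 4` once
`64 w(T)² ≤ c² m`. The suprema are first taken over finite subsets of `T`; since the failure events
are open, inner regularity of the Gaussian measure passes the estimate to `T`.
-/

open scoped NNReal ENNReal

section BoundedDifferences

lemma exists_forall_mem_Icc_of_abs_sub_le {α : Type*} {g : α → ℝ} {c : ℝ}
    (h : ∀ x y, |g x - g y| ≤ c) : ∃ a, ∀ x, g x ∈ Set.Icc a (a + c) := by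
  rcases isEmpty_or_nonempty α with _ | ⟨⟨x₀⟩⟩
  · exact ⟨0, isEmptyElim⟩
  have hbdd : BddBelow (Set.range g) :=
    ⟨g x₀ - c, by rintro _ ⟨x, rfl⟩; linarith [le_of_abs_le (h x₀ x)]⟩
  have : Nonempty α := ⟨x₀⟩
  refine ⟨⨅ x, g x, fun x => ⟨ciInf_le hbdd x, ?_⟩⟩
  rw [← sub_le_iff_le_add]
  exact le_ciInf fun y => by linarith [le_of_abs_le (h x y)]

lemma hasSubgaussianMGF_of_abs_sub_le {Ω : Type*} [MeasurableSpace Ω] {μ : Measure Ω}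
    [IsProbabilityMeasure μ] {X : Ω → ℝ} {c : ℝ≥0} (hX : AEMeasurable X μ)
    (h : ∀ x y, |X x - X y| ≤ c) :
    HasSubgaussianMGF (fun ω => X ω - ∫ ω', X ω' ∂μ) ((c / 2) ^ 2) μ := by
  obtain ⟨a, ha⟩ := exists_forall_mem_Icc_of_abs_sub_le h
  simpa using hasSubgaussianMGF_of_mem_Icc hX (.of_forall ha)

lemma hasSubgaussianMGF_add_prod {α β : Type*} [MeasurableSpace α] [MeasurableSpace β]
    {μ : Measure α} {ν : Measure β} [SFinite μ] [SFinite ν] {X : α → ℝ} {Y : α × β → ℝ}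
    {c d : ℝ≥0} (hX : HasSubgaussianMGF X c μ) (hYm : AEStronglyMeasurable Y (μ.prod ν))
    (hY : ∀ a, HasSubgaussianMGF (fun b => Y (a, b)) d ν) :
    HasSubgaussianMGF (fun p => X p.1 + Y p) (c + d) (μ.prod ν) := by
  have hfiber (t : ℝ) (a : α) : ∫ b, Real.exp (t * (X a + Y (a, b))) ∂ν =
      Real.exp (t * X a) * mgf (fun b => Y (a, b)) ν t := by
    simp only [mgf, mul_add, Real.exp_add, integral_const_mul]
  have hle (t : ℝ) (a : α) : ∫ b, Real.exp (t * (X a + Y (a, b))) ∂ν ≤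
      Real.exp (t * X a) * Real.exp (d * t ^ 2 / 2) := by
    rw [hfiber]
    exact mul_le_mul_of_nonneg_left ((hY a).mgf_le t) (Real.exp_nonneg _)
  have hint (t : ℝ) : Integrable (fun p => Real.exp (t * (X p.1 + Y p))) (μ.prod ν) := by
    have hmeas : AEStronglyMeasurable (fun p => Real.exp (t * (X p.1 + Y p))) (μ.prod ν) :=
      Real.continuous_exp.comp_aestronglyMeasurable
        ((hX.aestronglyMeasurable.comp_fst.add hYm).const_mul t)
    refine (integrable_prod_iff hmeas).2 ⟨.of_forall fun a => ?_, ?_⟩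
    · simpa only [mul_add, Real.exp_add] using ((hY a).integrable_exp_mul t).const_mul _
    · refine ((hX.integrable_exp_mul t).mul_const (Real.exp (d * t ^ 2 / 2))).mono'
        hmeas.norm.integral_prod_right' (.of_forall fun a => ?_)
      rw [Real.norm_eq_abs, abs_of_nonneg (integral_nonneg fun _ => norm_nonneg _)]
      simpa only [Real.norm_eq_abs, Real.abs_exp] using hle t a
  refine ⟨hint, fun t => ?_⟩
  calc mgf (fun p => X p.1 + Y p) (μ.prod ν) t
      = ∫ a, ∫ b, Real.exp (t * (X a + Y (a, b))) ∂ν ∂μ := integral_prod _ (hint t)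
    _ ≤ ∫ a, Real.exp (t * X a) * Real.exp (d * t ^ 2 / 2) ∂μ :=
        integral_mono (hint t).integral_prod_left ((hX.integrable_exp_mul t).mul_const _) (hle t)
    _ = mgf X μ t * Real.exp (d * t ^ 2 / 2) := integral_mul_const _ _
    _ ≤ Real.exp (c * t ^ 2 / 2) * Real.exp (d * t ^ 2 / 2) := by
        gcongr
        exact hX.mgf_le t
    _ = Real.exp ((c + d : ℝ≥0) * t ^ 2 / 2) := by
        rw [← Real.exp_add, NNReal.coe_add]
        ring_nf

lemma measurePreserving_finCons {n : ℕ} {Ω : Fin (n + 1) → Type*} [∀ k, MeasurableSpace (Ω k)]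
    (μ : ∀ k, Measure (Ω k)) [∀ k, SigmaFinite (μ k)] :
    MeasurePreserving (fun p : Ω 0 × (∀ k : Fin n, Ω k.succ) => (Fin.cons p.1 p.2 : ∀ k, Ω k))
      ((μ 0).prod (Measure.pi fun k : Fin n => μ k.succ)) (Measure.pi μ) := by
  have hcons : (fun p : Ω 0 × (∀ k : Fin n, Ω k.succ) => (Fin.cons p.1 p.2 : ∀ k, Ω k)) =
      (MeasurableEquiv.piFinSuccAbove Ω 0).symm :=
    funext fun p => (Fin.insertNth_zero p.1 p.2).symm
  rw [hcons]
  exact (measurePreserving_piFinSuccAbove μ 0).symm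

lemma integral_pi_eq_integral_integral_cons {n : ℕ} {Ω : Fin (n + 1) → Type*}
    [∀ k, MeasurableSpace (Ω k)] {μ : ∀ k, Measure (Ω k)} [∀ k, SigmaFinite (μ k)]
    {f : (∀ k, Ω k) → ℝ} (hf : Integrable f (Measure.pi μ)) :
    ∫ y, f y ∂Measure.pi μ =
      ∫ a, ∫ x, f (Fin.cons a x) ∂(Measure.pi fun k : Fin n => μ k.succ) ∂μ 0 := by
  have hcons := measurePreserving_finCons μ
  have hint := (hcons.integrable_comp hf.aestronglyMeasurable).2 hf
  have hfm := hf.aestronglyMeasurable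
  rw [← hcons.map_eq] at hfm ⊢
  rw [integral_map hcons.aemeasurable hfm]
  exact integral_prod _ hint

/-- The bounded differences property, as in McDiarmid's inequality: changing the `k`-th argument
of `f` alone changes its value by at most `c k`. -/
def HasBoundedDifferences {κ : Type*} [DecidableEq κ] {Ω : κ → Type*} (f : (∀ k, Ω k) → ℝ)
    (c : κ → ℝ≥0) : Prop :=
  ∀ x k y, |f (Function.update x k y) - f x| ≤ c k

namespace HasBoundedDifferences

lemma abs_sub_le_sum {κ : Type*} [DecidableEq κ] [Fintype κ] {Ω : κ → Type*}
    {f : (∀ k, Ω k) → ℝ} {c : κ → ℝ≥0} (hf : HasBoundedDifferences f c) (x y : ∀ k, Ω k) :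
    |f x - f y| ≤ ∑ k, (c k : ℝ) := by
  suffices h : ∀ s : Finset κ, |f (s.piecewise x y) - f y| ≤ ∑ k ∈ s, (c k : ℝ) by
    simpa using h univ
  intro s
  induction s using Finset.induction_on with
  | empty => simp
  | insert k s hk ih =>
    rw [piecewise_insert, sum_insert hk]
    exact (abs_sub_le _ (f (s.piecewise x y)) _).trans (add_le_add (hf _ k _) ih)

lemma integrable {κ : Type*} [DecidableEq κ] [Finite κ] {Ω : κ → Type*}
    [∀ k, MeasurableSpace (Ω k)] {μ : Measure (∀ k, Ω k)} [IsFiniteMeasure μ]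
    {f : (∀ k, Ω k) → ℝ} {c : κ → ℝ≥0} (hf : HasBoundedDifferences f c)
    (hfm : AEMeasurable f μ) : Integrable f μ := by
  have := Fintype.ofFinite κ
  obtain ⟨a, ha⟩ := exists_forall_mem_Icc_of_abs_sub_le hf.abs_sub_le_sum
  exact .of_mem_Icc a _ hfm (.of_forall ha)

variable {n : ℕ} {Ω : Fin (n + 1) → Type*} {f : (∀ k, Ω k) → ℝ} {c : Fin (n + 1) → ℝ≥0}

lemma comp_cons (hf : HasBoundedDifferences f c) (a : Ω 0) :
    HasBoundedDifferences (fun x : ∀ k : Fin n, Ω k.succ => f (Fin.cons a x))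
      (fun k => c k.succ) := fun x k y => by
  simpa only [Fin.cons_update] using hf (Fin.cons a x) k.succ y

lemma abs_cons_sub_cons_le (hf : HasBoundedDifferences f c) (a b : Ω 0)
    (x : ∀ k : Fin n, Ω k.succ) : |f (Fin.cons a x) - f (Fin.cons b x)| ≤ c 0 := by
  simpa only [Fin.update_cons_zero] using hf (Fin.cons b x) 0 a

lemma abs_integral_cons_sub_le [∀ k, MeasurableSpace (Ω k)]
    {ν : Measure (∀ k : Fin n, Ω k.succ)} [IsProbabilityMeasure ν]
    (hf : HasBoundedDifferences f c)
    (hfm : ∀ a : Ω 0, Measurable fun x : ∀ k : Fin n, Ω k.succ => f (Fin.cons a x)) (a b : Ω 0) :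
    |∫ x, f (Fin.cons a x) ∂ν - ∫ x, f (Fin.cons b x) ∂ν| ≤ c 0 := by
  have hint (a : Ω 0) : Integrable (fun x => f (Fin.cons a x)) ν :=
    (hf.comp_cons a).integrable (hfm a).aemeasurable
  rw [← integral_sub (hint a) (hint b)]
  simpa only [Real.norm_eq_abs, probReal_univ, mul_one] using norm_integral_le_of_norm_le_const
    (μ := ν) (.of_forall fun x => (Real.norm_eq_abs _).trans_le (hf.abs_cons_sub_cons_le a b x))

end HasBoundedDifferences

theorem HasBoundedDifferences.hasSubgaussianMGF {n : ℕ} {Ω : Fin n → Type*}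
    [∀ k, MeasurableSpace (Ω k)] {μ : ∀ k, Measure (Ω k)} [∀ k, IsProbabilityMeasure (μ k)]
    {f : (∀ k, Ω k) → ℝ} {c : Fin n → ℝ≥0} (hf : HasBoundedDifferences f c)
    (hfm : Measurable f) :
    HasSubgaussianMGF (fun x => f x - ∫ y, f y ∂Measure.pi μ) (∑ k, (c k / 2) ^ 2)
      (Measure.pi μ) := by
  induction n with
  | zero =>
    have hconst (x y) : f x = f y := congrArg f (Subsingleton.elim x y)
    have hzero : (fun x => f x - ∫ y, f y ∂Measure.pi μ) = fun _ => 0 := by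
      funext x
      simp [hconst _ x]
    simp [hzero]
  | succ n ih =>
    let ν := Measure.pi fun k : Fin n => μ k.succ
    let V (a : Ω 0) : ℝ := ∫ x, f (Fin.cons a x) ∂ν
    have hfcm : Measurable fun p : Ω 0 × (∀ k : Fin n, Ω k.succ) => f (Fin.cons p.1 p.2) :=
      hfm.comp (measurePreserving_finCons μ).measurable
    have hVm : StronglyMeasurable V := hfcm.stronglyMeasurable.integral_prod_right'
    have hV : ∫ a, V a ∂μ 0 = ∫ y, f y ∂Measure.pi μ :=
      (integral_pi_eq_integral_integral_cons (hf.integrable hfm.aemeasurable)).symm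
    have hfirst : HasSubgaussianMGF (fun a => V a - ∫ y, f y ∂Measure.pi μ) ((c 0 / 2) ^ 2)
        (μ 0) := by
      rw [← hV]
      exact hasSubgaussianMGF_of_abs_sub_le hVm.measurable.aemeasurable
        (hf.abs_integral_cons_sub_le fun a => hfcm.comp measurable_prodMk_left)
    have hrest (a : Ω 0) : HasSubgaussianMGF (fun x => f (Fin.cons a x) - V a)
        (∑ k : Fin n, (c k.succ / 2) ^ 2) ν :=
      ih (hf.comp_cons a) (hfcm.comp measurable_prodMk_left)
    have hsum := hasSubgaussianMGF_add_prod hfirst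
      (Y := fun p => f (Fin.cons p.1 p.2) - V p.1)
      (hfcm.sub (hVm.measurable.comp measurable_fst)).aestronglyMeasurable hrest
    have hsplit : MeasurePreserving (fun x : ∀ k, Ω k => (x 0, Fin.tail x)) (Measure.pi μ)
        ((μ 0).prod ν) := measurePreserving_piFinSuccAbove μ 0
    have hcomp (x : ∀ k, Ω k) : V (x 0) - ∫ y, f y ∂Measure.pi μ +
        (f (Fin.cons (x 0) (Fin.tail x)) - V (x 0)) = f x - ∫ y, f y ∂Measure.pi μ := by
      rw [Fin.cons_self_tail, sub_add_sub_cancel']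
    rw [Fin.sum_univ_succ, ← funext hcomp]
    exact .of_map hsplit.aemeasurable (hsplit.map_eq.symm ▸ hsum)

theorem HasBoundedDifferences.measureReal_integral_add_le_le {n : ℕ} {Ω : Fin n → Type*}
    [∀ k, MeasurableSpace (Ω k)] {μ : ∀ k, Measure (Ω k)} [∀ k, IsProbabilityMeasure (μ k)]
    {f : (∀ k, Ω k) → ℝ} {c : Fin n → ℝ≥0} (hf : HasBoundedDifferences f c)
    (hfm : Measurable f) {ε : ℝ} (hε : 0 ≤ ε) :
    (Measure.pi μ).real {x | ∫ y, f y ∂Measure.pi μ + ε ≤ f x} ≤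
      Real.exp (-2 * ε ^ 2 / ∑ k, (c k : ℝ) ^ 2) := by
  have hexp : -ε ^ 2 / (2 * (∑ k, (c k / 2) ^ 2 : ℝ≥0)) = -2 * ε ^ 2 / ∑ k, (c k : ℝ) ^ 2 := by
    push_cast
    simp only [div_pow, ← sum_div]
    ring
  simpa only [hexp, le_sub_iff_add_le'] using (hf.hasSubgaussianMGF hfm).measure_ge_le hε

end BoundedDifferences

section Symmetrization

variable {ι : Type*} [Finite ι]

lemma integrable_iSup {Ω : Type*} [MeasurableSpace Ω] {μ : Measure Ω} {f : ι → Ω → ℝ}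
    (hf : ∀ t, Integrable (f t) μ) : Integrable (fun ω => ⨆ t, f t ω) μ := by
  rcases isEmpty_or_nonempty ι with _ | _
  · simp [Real.iSup_of_isEmpty]
  have := Fintype.ofFinite ι
  refine (integrable_finsetSum univ fun t _ => (hf t).abs).mono'
    (AEMeasurable.iSup fun t => (hf t).aemeasurable).aestronglyMeasurable (.of_forall fun ω => ?_)
  obtain ⟨t, ht⟩ := exists_eq_ciSup_of_finite (f := fun t => f t ω)
  rw [← ht, Real.norm_eq_abs]
  exact single_le_sum (f := fun t => |f t ω|) (fun t _ => abs_nonneg _) (mem_univ t)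

lemma iSup_integral_le_integral_iSup [Nonempty ι] {Ω : Type*} [MeasurableSpace Ω] {μ : Measure Ω}
    {f : ι → Ω → ℝ} (hf : ∀ t, Integrable (f t) μ) :
    ⨆ t, ∫ ω, f t ω ∂μ ≤ ∫ ω, ⨆ t, f t ω ∂μ :=
  ciSup_le fun t => integral_mono (hf t) (integrable_iSup hf) fun ω =>
    le_ciSup (f := fun t => f t ω) (Set.finite_range _).bddAbove t

-- The roles of the two maximizers on the left may be exchanged on the right, so only the absolute
-- values of the increments of `u` matter.
lemma iSup_add_iSup_sub_le_of_abs_sub_le [Nonempty ι] (b : ι → ℝ) {u v : ι → ℝ}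
    (h : ∀ s t, |v s - v t| ≤ |u s - u t|) :
    (⨆ t, (b t + v t)) + ⨆ t, (b t - v t) ≤ (⨆ t, (b t + u t)) + ⨆ t, (b t - u t) := by
  obtain ⟨s, hs⟩ := exists_eq_ciSup_of_finite (f := fun t => b t + v t)
  obtain ⟨t, ht⟩ := exists_eq_ciSup_of_finite (f := fun t => b t - v t)
  have hadd (r : ι) : b r + u r ≤ ⨆ t, (b t + u t) :=
    le_ciSup (f := fun t => b t + u t) (Set.finite_range _).bddAbove r
  have hsub (r : ι) : b r - u r ≤ ⨆ t, (b t - u t) :=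
    le_ciSup (f := fun t => b t - u t) (Set.finite_range _).bddAbove r
  rw [← hs, ← ht]
  have hv := (le_abs_self _).trans (h s t)
  rcases abs_cases (u s - u t) with ⟨hu, -⟩ | ⟨hu, -⟩
  · linarith [hadd s, hsub t]
  · linarith [hadd t, hsub s]

variable {E : Type*} [MeasurableSpace E] {ν : Measure E} [IsProbabilityMeasure ν]

-- Halving `b t` between the two summands, the mean is moved out of its supremum by Jensen; no
-- independent copy of `g` is needed.
lemma integral_iSup_add_integral_sub_le [Nonempty ι] {f : ι → E → ℝ}
    (hf : ∀ t, Integrable (f t) ν) (b : ι → ℝ) :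
    ∫ g, ⨆ t, (b t + (∫ h, f t h ∂ν - f t g)) ∂ν ≤
      (∫ g, ((⨆ t, (b t + 2 * f t g)) + ⨆ t, (b t - 2 * f t g)) ∂ν) / 2 := by
  have hadd : Integrable (fun g => ⨆ t, (b t + 2 * f t g)) ν :=
    integrable_iSup fun t => (integrable_const _).add ((hf t).const_mul 2)
  have hsub : Integrable (fun g => ⨆ t, (b t - 2 * f t g)) ν :=
    integrable_iSup fun t => (integrable_const _).sub ((hf t).const_mul 2)
  have hcenter : Integrable (fun g => ⨆ t, (b t + (∫ h, f t h ∂ν - f t g))) ν :=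
    integrable_iSup fun t => (integrable_const _).add ((integrable_const _).sub (hf t))
  have hmean : ⨆ t, (b t + 2 * ∫ h, f t h ∂ν) ≤ ∫ g, ⨆ t, (b t + 2 * f t g) ∂ν := by
    refine le_trans (le_of_eq ?_) (iSup_integral_le_integral_iSup fun t =>
      (integrable_const _).add ((hf t).const_mul 2))
    congr! with t
    rw [integral_add (integrable_const _) ((hf t).const_mul 2), integral_const_mul]
    simp
  have hpoint (g : E) : ⨆ t, (b t + (∫ h, f t h ∂ν - f t g)) ≤
      ((∫ g, ⨆ t, (b t + 2 * f t g) ∂ν) + ⨆ t, (b t - 2 * f t g)) / 2 := by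
    refine ciSup_le fun t => ?_
    have h₁ : b t + 2 * ∫ h, f t h ∂ν ≤ ⨆ t, (b t + 2 * ∫ h, f t h ∂ν) :=
      le_ciSup (f := fun t => b t + 2 * ∫ h, f t h ∂ν) (Set.finite_range _).bddAbove t
    have h₂ : b t - 2 * f t g ≤ ⨆ t, (b t - 2 * f t g) :=
      le_ciSup (f := fun t => b t - 2 * f t g) (Set.finite_range _).bddAbove t
    linarith
  calc ∫ g, ⨆ t, (b t + (∫ h, f t h ∂ν - f t g)) ∂ν
      ≤ ∫ g, ((∫ g, ⨆ t, (b t + 2 * f t g) ∂ν) + ⨆ t, (b t - 2 * f t g)) / 2 ∂ν :=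
        integral_mono hcenter (((integrable_const _).add hsub).div_const 2) hpoint
    _ = _ := by
        rw [integral_div, integral_add (integrable_const _) hsub, integral_add hadd hsub]
        simp

lemma integrable_comp_of_lipschitzWith {X : E → ℝ} (hX : Integrable X ν) {K : ℝ≥0} {ψ : ℝ → ℝ}
    (hψ : LipschitzWith K ψ) : Integrable (fun g => ψ (X g)) ν := by
  refine ((integrable_const |ψ 0|).add (hX.abs.const_mul K)).mono'
    (hψ.continuous.comp_aestronglyMeasurable hX.aestronglyMeasurable) (.of_forall fun g => ?_)
  have hlip : |ψ (X g) - ψ 0| ≤ K * |X g| := by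
    simpa [Real.dist_eq] using hψ.dist_le_mul (X g) 0
  have htri := abs_add_le (ψ 0) (ψ (X g) - ψ 0)
  rw [add_sub_cancel] at htri
  exact htri.trans (by simpa using hlip)

lemma integral_iSup_add_integral_comp_sub_le [AddGroup E] [MeasurableNeg E] [ν.IsNegInvariant]
    [Nonempty ι] {X : ι → E → ℝ} (hX : ∀ t, Integrable (X t) ν)
    (hodd : ∀ t g, X t (-g) = -X t g) {ψ : ℝ → ℝ} (hψ : LipschitzWith 1 ψ)
    (b : ι → ℝ) :
    ∫ g, ⨆ t, (b t + (∫ h, ψ (X t h) ∂ν - ψ (X t g))) ∂ν ≤ ∫ g, ⨆ t, (b t + 2 * X t g) ∂ν := by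
  have hψX (t : ι) : Integrable (fun g => ψ (X t g)) ν := integrable_comp_of_lipschitzWith (hX t) hψ
  have hcontract (g : E) : (⨆ t, (b t + 2 * ψ (X t g))) + ⨆ t, (b t - 2 * ψ (X t g)) ≤
      (⨆ t, (b t + 2 * X t g)) + ⨆ t, (b t - 2 * X t g) := by
    refine iSup_add_iSup_sub_le_of_abs_sub_le b fun s t => ?_
    have hlip : |ψ (X s g) - ψ (X t g)| ≤ |X s g - X t g| := by
      simpa [Real.dist_eq] using hψ.dist_le_mul (X s g) (X t g)
    simpa only [← mul_sub, abs_mul] using mul_le_mul_of_nonneg_left hlip (abs_nonneg 2)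
  have hadd {f : ι → E → ℝ} (hf : ∀ t, Integrable (f t) ν) :
      Integrable (fun g => ⨆ t, (b t + 2 * f t g)) ν :=
    integrable_iSup fun t => (integrable_const _).add ((hf t).const_mul 2)
  have hsub {f : ι → E → ℝ} (hf : ∀ t, Integrable (f t) ν) :
      Integrable (fun g => ⨆ t, (b t - 2 * f t g)) ν :=
    integrable_iSup fun t => (integrable_const _).sub ((hf t).const_mul 2)
  have hsymm : ∫ g, ⨆ t, (b t - 2 * X t g) ∂ν = ∫ g, ⨆ t, (b t + 2 * X t g) ∂ν := by
    rw [← integral_neg_eq_self]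
    simp only [hodd, mul_neg, sub_neg_eq_add]
  calc ∫ g, ⨆ t, (b t + (∫ h, ψ (X t h) ∂ν - ψ (X t g))) ∂ν
      ≤ (∫ g, ((⨆ t, (b t + 2 * ψ (X t g))) + ⨆ t, (b t - 2 * ψ (X t g))) ∂ν) / 2 :=
        integral_iSup_add_integral_sub_le hψX b
    _ ≤ (∫ g, ((⨆ t, (b t + 2 * X t g)) + ⨆ t, (b t - 2 * X t g)) ∂ν) / 2 := by
        gcongr ?_ / 2
        exact integral_mono ((hadd hψX).add (hsub hψX)) ((hadd hX).add (hsub hX)) hcontract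
    _ = ∫ g, ⨆ t, (b t + 2 * X t g) ∂ν := by
        rw [integral_add (hadd hX) (hsub hX), hsymm, add_self_div_two]

-- One row is exchanged at a time: Fubini turns the remaining rows into part of the offset `b`.
lemma integral_pi_iSup_add_sum_le {F G : ι → E → ℝ}
    (hF : ∀ t, Integrable (F t) ν) (hG : ∀ t, Integrable (G t) ν)
    (h : ∀ b : ι → ℝ, ∫ g, ⨆ t, (b t + F t g) ∂ν ≤ ∫ g, ⨆ t, (b t + G t g) ∂ν)
    (m : ℕ) (b : ι → ℝ) :
    ∫ Φ, ⨆ t, (b t + ∑ i, F t (Φ i)) ∂(Measure.pi fun _ : Fin m => ν) ≤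
      ∫ Φ, ⨆ t, (b t + ∑ i, G t (Φ i)) ∂(Measure.pi fun _ : Fin m => ν) := by
  induction m generalizing b with
  | zero => simp
  | succ m ih =>
    have hsum {H : ι → E → ℝ} (hH : ∀ t, Integrable (H t) ν) (n : ℕ) (t : ι) :
        Integrable (fun Φ : Fin n → E => b t + ∑ i, H t (Φ i)) (Measure.pi fun _ => ν) :=
      (integrable_const _).add (integrable_finsetSum _ fun i _ => integrable_comp_eval (hH t))
    have hprod {H K : ι → E → ℝ} (hH : ∀ t, Integrable (H t) ν) (hK : ∀ t, Integrable (K t) ν) :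
        Integrable (fun p : E × (Fin m → E) => ⨆ t, (b t + H t p.1 + ∑ i, K t (p.2 i)))
          (ν.prod (Measure.pi fun _ => ν)) :=
      integrable_iSup fun t => (((integrable_const _).add (hH t)).comp_fst _).add
        ((integrable_finsetSum _ fun i _ => integrable_comp_eval (hK t)).comp_snd _)
    rw [integral_pi_eq_integral_integral_cons (integrable_iSup (hsum hF _)),
      integral_pi_eq_integral_integral_cons (integrable_iSup (hsum hG _))]
    simp only [Fin.sum_univ_succ, Fin.cons_zero, Fin.cons_succ, ← add_assoc]
    calc ∫ g, ∫ Φ, ⨆ t, (b t + F t g + ∑ i, F t (Φ i)) ∂(Measure.pi fun _ : Fin m => ν) ∂ν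
        ≤ ∫ g, ∫ Φ, ⨆ t, (b t + F t g + ∑ i, G t (Φ i)) ∂(Measure.pi fun _ : Fin m => ν) ∂ν := by
          exact integral_mono (hprod hF hF).integral_prod_left (hprod hF hG).integral_prod_left
            fun g => ih _
      _ = ∫ Φ, ∫ g, ⨆ t, (b t + F t g + ∑ i, G t (Φ i)) ∂ν ∂(Measure.pi fun _ : Fin m => ν) :=
          integral_integral_swap (hprod hF hG)
      _ ≤ ∫ Φ, ∫ g, ⨆ t, (b t + G t g + ∑ i, G t (Φ i)) ∂ν ∂(Measure.pi fun _ : Fin m => ν) := by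
          refine integral_mono (hprod hF hG).integral_prod_right (hprod hG hG).integral_prod_right
            fun Φ => ?_
          simpa only [add_right_comm] using h fun t => b t + ∑ i, G t (Φ i)
      _ = ∫ g, ∫ Φ, ⨆ t, (b t + G t g + ∑ i, G t (Φ i)) ∂(Measure.pi fun _ : Fin m => ν) ∂ν :=
          (integral_integral_swap (hprod hG hG)).symm

end Symmetrization

section GaussianVectors

instance isNegInvariant_gaussianReal (v : ℝ≥0) : (gaussianReal 0 v).IsNegInvariant :=
  ⟨gaussianReal_map_neg.trans (by rw [neg_zero])⟩

instance isGaussian_pi {κ : Type*} [Fintype κ] {E : κ → Type*} [∀ i, NormedAddCommGroup (E i)]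
    [∀ i, NormedSpace ℝ (E i)] [∀ i, MeasurableSpace (E i)] [∀ i, CompleteSpace (E i)]
    [∀ i, BorelSpace (E i)] [∀ i, SecondCountableTopology (E i)] {μ : ∀ i, Measure (E i)}
    [∀ i, IsGaussian (μ i)] : IsGaussian (Measure.pi μ) := by
  have hindep : iIndepFun (fun i (x : ∀ i, E i) => x i) (Measure.pi μ) :=
    iIndepFun_pi (X := fun _ => id) fun _ => aemeasurable_id
  have heval (i : κ) : HasGaussianLaw (fun x : ∀ i, E i => x i) (Measure.pi μ) :=
    ⟨(measurePreserving_eval μ i).map_eq ▸ inferInstance⟩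
  simpa only [Measure.map_id'] using (hindep.hasGaussianLaw heval).isGaussian_map

variable {N : ℕ}

instance isProbabilityMeasure_stdGaussianVec : IsProbabilityMeasure (stdGaussianVec N) :=
  Measure.pi.instIsProbabilityMeasure _

instance isGaussian_stdGaussianVec : IsGaussian (stdGaussianVec N) := isGaussian_pi

instance isNegInvariant_stdGaussianVec : (stdGaussianVec N).IsNegInvariant :=
  Measure.pi.isNegInvariant _

instance isProbabilityMeasure_stdGaussianMatrix {m : ℕ} :
    IsProbabilityMeasure (stdGaussianMatrix m N) :=
  Measure.pi.instIsProbabilityMeasure _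

lemma map_sum_pi_eq_map_sqrt_smul {E : Type*} [NormedAddCommGroup E] [NormedSpace ℝ E]
    [MeasurableSpace E] [BorelSpace E] [CompleteSpace E] [SecondCountableTopology E]
    {ν : Measure E} [IsGaussian ν] (hν : ν[id] = 0) (m : ℕ) :
    (Measure.pi fun _ : Fin m => ν).map (fun Φ => ∑ i, Φ i) = ν.map fun g => √m • g := by
  refine Measure.ext_of_charFunDual (funext fun L => ?_)
  have hsmul : ν.map (fun g => √m • g) = ν.map (√(m : ℝ) • ContinuousLinearMap.id ℝ E) := rfl
  rw [charFunDual_map_sum_pi_eq_prod, hsmul, charFunDual_map]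
  simp only [prod_const, card_univ, Fintype.card_fin, Pi.pow_apply,
    IsGaussian.charFunDual_eq_of_integral_eq_zero hν, ← Complex.exp_nat_mul]
  have hvar : Var[L.comp (√(m : ℝ) • ContinuousLinearMap.id ℝ E); ν] = m * Var[L; ν] := by
    rw [ContinuousLinearMap.comp_smul, ContinuousLinearMap.comp_id, FunLike.coe_smul,
      variance_smul, Real.sq_sqrt m.cast_nonneg]
  rw [hvar]
  push_cast
  ring_nf

lemma map_dotProduct_stdGaussianVec (x : Fin N → ℝ) :
    (stdGaussianVec N).map (fun g => g ⬝ᵥ x) = gaussianReal 0 (∑ j, x j ^ 2).toNNReal := by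
  let L : StrongDual ℝ (EuclideanSpace ℝ (Fin N)) := innerSL ℝ (WithLp.toLp 2 x)
  have hL : (stdGaussianVec N).map (fun g => g ⬝ᵥ x) =
      (stdGaussian (EuclideanSpace ℝ (Fin N))).map L := by
    rw [← map_pi_eq_stdGaussian, Measure.map_map (by fun_prop) (by fun_prop)]
    rfl
  have hnorm : ‖L‖ ^ 2 = ∑ j, x j ^ 2 := by simp [L, EuclideanSpace.norm_sq_eq]
  rw [hL, IsGaussian.map_eq_gaussianReal, integral_strongDual_stdGaussian,
    variance_dual_stdGaussian, hnorm]

lemma integrable_dotProduct_stdGaussianVec (x : Fin N → ℝ) :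
    Integrable (fun g => g ⬝ᵥ x) (stdGaussianVec N) :=
  integrable_finsetSum _ fun _ _ =>
    (integrable_eval (μ := fun _ : Fin N => gaussianReal 0 1) IsGaussian.integrable_id).mul_const _

lemma integral_id_eq_zero_of_isNegInvariant {E : Type*} [NormedAddCommGroup E] [NormedSpace ℝ E]
    [MeasurableSpace E] [MeasurableNeg E] (ν : Measure E) [ν.IsNegInvariant] : ν[id] = 0 := by
  have := IsAddTorsionFree.of_isTorsionFree ℝ E
  have h := integral_neg_eq_self id ν
  simp only [id_eq] at h
  rw [integral_neg] at h
  exact self_eq_neg.mp h.symm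

end GaussianVectors

section GaussianWidth

variable {N : ℕ} {ι : Type*} [Finite ι] {T : Set (Fin N → ℝ)} {x : ι → Fin N → ℝ}

lemma abs_dotProduct_le_l1Norm_mul_norm (g y : Fin N → ℝ) : |g ⬝ᵥ y| ≤ l1Norm g * ‖y‖ := by
  rw [l1Norm, sum_mul]
  refine (abs_sum_le_sum_abs _ _).trans (sum_le_sum fun j _ => ?_)
  rw [abs_mul]
  exact mul_le_mul_of_nonneg_left (norm_le_pi_norm y j) (abs_nonneg _)

lemma integrable_l1Norm : Integrable l1Norm (stdGaussianVec N) :=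
  integrable_finsetSum _ fun _ _ =>
    (integrable_eval (μ := fun _ : Fin N => gaussianReal 0 1) IsGaussian.integrable_id).abs

lemma bddAbove_dotProduct_image (hT : Bornology.IsBounded T) (g : Fin N → ℝ) :
    BddAbove ((fun y => g ⬝ᵥ y) '' T) := by
  obtain ⟨r, hr⟩ := hT.exists_norm_le
  refine ⟨l1Norm g * r, Set.forall_mem_image.2 fun y hy => ?_⟩
  have hg : 0 ≤ l1Norm g := sum_nonneg fun _ _ => abs_nonneg _
  exact (le_abs_self _).trans ((abs_dotProduct_le_l1Norm_mul_norm g y).trans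
    (mul_le_mul_of_nonneg_left (hr y hy) hg))

lemma measurable_sSup_dotProduct_image (hT : Bornology.IsBounded T) :
    Measurable fun g => sSup ((fun y => g ⬝ᵥ y) '' T) := by
  simp_rw [sSup_image']
  refine (lowerSemicontinuous_ciSup (fun g => ?_) fun y => ?_).measurable
  · simpa only [Set.image_eq_range] using bddAbove_dotProduct_image hT g
  · exact (by fun_prop : Continuous fun g : Fin N → ℝ => g ⬝ᵥ y.1).lowerSemicontinuous

lemma integrable_sSup_dotProduct_image (hT : Bornology.IsBounded T) :
    Integrable (fun g => sSup ((fun y => g ⬝ᵥ y) '' T)) (stdGaussianVec N) := by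
  rcases T.eq_empty_or_nonempty with rfl | hne
  · simp
  obtain ⟨r, hr⟩ := hT.exists_norm_le
  refine (integrable_l1Norm.mul_const r).mono'
    (measurable_sSup_dotProduct_image hT).aestronglyMeasurable (.of_forall fun g => ?_)
  have hg : 0 ≤ l1Norm g := sum_nonneg fun _ _ => abs_nonneg _
  have hbound (y) (hy : y ∈ T) : |g ⬝ᵥ y| ≤ l1Norm g * r :=
    (abs_dotProduct_le_l1Norm_mul_norm g y).trans (mul_le_mul_of_nonneg_left (hr y hy) hg)
  obtain ⟨y, hy⟩ := hne
  refine abs_le.2 ⟨?_, ?_⟩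
  · exact (neg_le_of_abs_le (hbound y hy)).trans
      (le_csSup (bddAbove_dotProduct_image hT g) (Set.mem_image_of_mem _ hy))
  · exact csSup_le (Set.Nonempty.image _ ⟨y, hy⟩)
      (Set.forall_mem_image.2 fun z hz => le_of_abs_le (hbound z hz))

lemma integral_iSup_dotProduct_le_gaussianWidth [Nonempty ι] (hT : Bornology.IsBounded T)
    (hx : ∀ t, x t ∈ T) : ∫ g, ⨆ t, g ⬝ᵥ x t ∂stdGaussianVec N ≤ gaussianWidth T :=
  integral_mono (integrable_iSup fun t => integrable_dotProduct_stdGaussianVec (x t))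
    (integrable_sSup_dotProduct_image hT) fun g => ciSup_le fun t =>
      le_csSup (bddAbove_dotProduct_image hT g) (Set.mem_image_of_mem _ (hx t))

lemma integral_iSup_sum_dotProduct (x : ι → Fin N → ℝ) (m : ℕ) :
    ∫ Φ, ⨆ t, ∑ i, Φ i ⬝ᵥ x t ∂stdGaussianMatrix m N =
      √m * ∫ g, ⨆ t, g ⬝ᵥ x t ∂stdGaussianVec N := by
  have hmeas : Measurable fun g : Fin N → ℝ => ⨆ t, g ⬝ᵥ x t := .iSup fun t => by fun_prop
  calc ∫ Φ, ⨆ t, ∑ i, Φ i ⬝ᵥ x t ∂stdGaussianMatrix m N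
      = ∫ g, ⨆ t, g ⬝ᵥ x t ∂(stdGaussianMatrix m N).map fun Φ => ∑ i, Φ i := by
        rw [integral_map (by fun_prop) hmeas.aestronglyMeasurable]
        simp only [sum_dotProduct]
    _ = ∫ g, ⨆ t, (√m • g) ⬝ᵥ x t ∂stdGaussianVec N := by
        rw [stdGaussianMatrix, map_sum_pi_eq_map_sqrt_smul
          (integral_id_eq_zero_of_isNegInvariant _), integral_map (by fun_prop)
          hmeas.aestronglyMeasurable]
    _ = √m * ∫ g, ⨆ t, g ⬝ᵥ x t ∂stdGaussianVec N := by
        simp only [smul_dotProduct, smul_eq_mul, ← Real.mul_iSup_of_nonneg (Real.sqrt_nonneg _),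
          integral_const_mul]

lemma integral_iSup_sum_integral_comp_sub_le_mul_gaussianWidth [Nonempty ι]
    (hT : Bornology.IsBounded T) (hx : ∀ t, x t ∈ T) {ψ : ℝ → ℝ} (hψ : LipschitzWith 1 ψ) (m : ℕ) :
    ∫ Φ, ⨆ t, ∑ i, (∫ h, ψ (h ⬝ᵥ x t) ∂stdGaussianVec N - ψ (Φ i ⬝ᵥ x t)) ∂stdGaussianMatrix m N ≤
      2 * √m * gaussianWidth T := by
  have hint (t : ι) := integrable_dotProduct_stdGaussianVec (x t)
  have hrow (b : ι → ℝ) := integral_iSup_add_integral_comp_sub_le hint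
    (fun t g => neg_dotProduct g (x t)) hψ b
  have hrows := integral_pi_iSup_add_sum_le
    (fun t => (integrable_const _).sub (integrable_comp_of_lipschitzWith (hint t) hψ))
    (fun t => (hint t).const_mul 2) hrow m 0
  simp only [Pi.zero_apply, zero_add, ← mul_sum,
    ← Real.mul_iSup_of_nonneg (zero_le_two (α := ℝ)), integral_const_mul] at hrows
  calc _ ≤ 2 * ∫ Φ, ⨆ t, ∑ i, Φ i ⬝ᵥ x t ∂stdGaussianMatrix m N := hrows
    _ = 2 * √m * ∫ g, ⨆ t, g ⬝ᵥ x t ∂stdGaussianVec N := by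
        rw [integral_iSup_sum_dotProduct, mul_assoc]
    _ ≤ 2 * √m * gaussianWidth T := by
        gcongr
        exact integral_iSup_dotProduct_le_gaussianWidth hT hx

end GaussianWidth

section LowerTail

lemma abs_ciSup_sub_ciSup_le {ι : Type*} [Finite ι] [Nonempty ι] {a b : ι → ℝ} {c : ℝ}
    (h : ∀ t, |a t - b t| ≤ c) : |(⨆ t, a t) - ⨆ t, b t| ≤ c := by
  have hle {u v : ι → ℝ} (huv : ∀ t, u t - v t ≤ c) : ⨆ t, u t ≤ c + ⨆ t, v t :=
    ciSup_le fun t => (sub_le_iff_le_add.1 (huv t)).trans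
      (add_le_add_right (le_ciSup (Set.finite_range v).bddAbove t) c)
  rw [abs_sub_le_iff, sub_le_iff_le_add, sub_le_iff_le_add]
  exact ⟨hle fun t => (abs_sub_le_iff.1 (h t)).1, hle fun t => (abs_sub_le_iff.1 (h t)).2⟩

lemma hasBoundedDifferences_iSup_sum {ι κ E : Type*} [Finite ι] [Nonempty ι] [Fintype κ]
    [DecidableEq κ] {F : ι → E → ℝ} {c : ℝ≥0} (hF : ∀ t g h, |F t g - F t h| ≤ c) :
    HasBoundedDifferences (fun Φ : κ → E => ⨆ t, ∑ i, F t (Φ i)) fun _ => c := by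
  refine fun Φ k g => abs_ciSup_sub_ciSup_le fun t => ?_
  rw [← sum_sub_distrib, sum_eq_single k (fun i _ hi => ?_) (by simp)]
  · simpa only [Function.update_self] using hF t g (Φ k)
  · rw [Function.update_of_ne hi, sub_self]

lemma measureReal_integral_iSup_sum_add_mul_le_le {ι E : Type*} [Finite ι] [Nonempty ι]
    [MeasurableSpace E] {ν : Measure E} [IsProbabilityMeasure ν] {F : ι → E → ℝ}
    (hFm : ∀ t, Measurable (F t)) (hF : ∀ t g h, |F t g - F t h| ≤ 1) (m : ℕ) {s : ℝ}
    (hs : 0 ≤ s) :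
    (Measure.pi fun _ : Fin m => ν).real {Φ |
      ∫ Ψ, ⨆ t, ∑ i, F t (Ψ i) ∂(Measure.pi fun _ : Fin m => ν) + s * m ≤ ⨆ t, ∑ i, F t (Φ i)} ≤
      Real.exp (-(2 * s ^ 2 * m)) := by
  have hdiff : HasBoundedDifferences (fun Φ : Fin m → E => ⨆ t, ∑ i, F t (Φ i)) fun _ => 1 :=
    hasBoundedDifferences_iSup_sum hF
  have hmeas : Measurable fun Φ : Fin m → E => ⨆ t, ∑ i, F t (Φ i) :=
    .iSup fun t => Finset.measurable_fun_sum _ fun i _ => (hFm t).comp (measurable_pi_apply i)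
  refine (hdiff.measureReal_integral_add_le_le hmeas (by positivity)).trans_eq ?_
  rcases m.eq_zero_or_pos with rfl | hm
  · simp
  · simp only [NNReal.coe_one, one_pow, sum_const, card_univ, Fintype.card_fin, nsmul_eq_mul,
      mul_one]
    congr 1
    field_simp

/-- The absolute value truncated at `1`: a contraction below `|·|` with values in `[0, 1]`, which
makes sums over the rows of a matrix satisfy the bounded differences property. -/
noncomputable def truncAbs (u : ℝ) : ℝ := min |u| 1

lemma lipschitzWith_truncAbs : LipschitzWith 1 truncAbs :=
  lipschitzWith_one_norm.min_const 1

lemma truncAbs_mem_Icc (u : ℝ) : truncAbs u ∈ Set.Icc 0 1 :=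
  ⟨le_min (abs_nonneg u) zero_le_one, min_le_right _ _⟩

lemma truncAbs_le_abs (u : ℝ) : truncAbs u ≤ |u| := min_le_left _ _

/-- The mean of `truncAbs` under `N(0, 1)`, the absolute constant from which those of the
theorem are built. -/
noncomputable def gaussianTruncMean : ℝ := ∫ u, truncAbs u ∂gaussianReal 0 1

lemma gaussianTruncMean_pos : 0 < gaussianTruncMean := by
  have hint : Integrable truncAbs (gaussianReal 0 1) :=
    .of_mem_Icc 0 1 lipschitzWith_truncAbs.continuous.aemeasurable (.of_forall truncAbs_mem_Icc)
  have hsupp : Function.support truncAbs = {0}ᶜ := by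
    ext u
    rw [Function.mem_support, ← (truncAbs_mem_Icc u).1.lt_iff_ne', truncAbs, lt_min_iff, abs_pos]
    simp
  refine (integral_pos_iff_support_of_nonneg (fun u => (truncAbs_mem_Icc u).1) hint).2 ?_
  have := nullSingletonClass_gaussianReal (μ := 0) (v := 1) one_ne_zero
  rw [hsupp, prob_compl_eq_one_sub (measurableSet_singleton 0), measure_singleton]
  simp

variable {N m : ℕ} {T : Set (Fin N → ℝ)}

lemma integral_truncAbs_dotProduct {x : Fin N → ℝ} (hx : l2Norm x = 1) :
    ∫ g, truncAbs (g ⬝ᵥ x) ∂stdGaussianVec N = gaussianTruncMean := by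
  rw [gaussianTruncMean, ← Real.toNNReal_one, ← Real.sqrt_eq_one.1 hx,
    ← map_dotProduct_stdGaussianVec, integral_map (by fun_prop)
    lipschitzWith_truncAbs.continuous.aestronglyMeasurable]

lemma norm_le_l2Norm (x : Fin N → ℝ) : ‖x‖ ≤ l2Norm x :=
  (pi_norm_le_iff_of_nonneg (Real.sqrt_nonneg _)).2 fun j =>
    Real.abs_le_sqrt (single_le_sum (f := fun j => x j ^ 2) (fun _ _ => sq_nonneg _) (mem_univ j))

lemma isBounded_of_forall_l2Norm_eq_one (hT : ∀ x ∈ T, l2Norm x = 1) : Bornology.IsBounded T :=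
  isBounded_iff_forall_norm_le.2 ⟨1, fun x hx => (norm_le_l2Norm x).trans_eq (hT x hx)⟩

lemma mul_sqrt_mul_le_of_div_sq_mul_sq_le {c w : ℝ} (hc : 0 < c) {M : ℝ} (hM : 0 ≤ M)
    (h : 64 / c ^ 2 * w ^ 2 ≤ M) : 2 * √M * w ≤ c * M / 4 := by
  have hw : w ≤ c * √M / 8 := by
    refine le_of_abs_le (abs_le_of_sq_le_sq ?_ (by positivity))
    rw [div_mul_eq_mul_div, div_le_iff₀ (by positivity)] at h
    rw [div_pow, mul_pow, Real.sq_sqrt hM]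
    linarith
  calc 2 * √M * w ≤ 2 * √M * (c * √M / 8) := by gcongr
    _ = c * √M ^ 2 / 4 := by ring
    _ = c * M / 4 := by rw [Real.sq_sqrt hM]

lemma measureReal_exists_sum_abs_dotProduct_lt_le {ι : Type*} [Finite ι] [Nonempty ι]
    {x : ι → Fin N → ℝ} (hT : ∀ x ∈ T, l2Norm x = 1) (hx : ∀ t, x t ∈ T)
    (hm : 64 / gaussianTruncMean ^ 2 * gaussianWidth T ^ 2 ≤ m) :
    (stdGaussianMatrix m N).real {Φ | ∃ t, ∑ i, |Φ i ⬝ᵥ x t| < gaussianTruncMean / 2 * m} ≤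
      Real.exp (-(gaussianTruncMean ^ 2 / 8 * m)) := by
  have hmeas (t : ι) : Measurable fun g : Fin N → ℝ => gaussianTruncMean - truncAbs (g ⬝ᵥ x t) :=
    (lipschitzWith_truncAbs.continuous.measurable.comp (by fun_prop)).const_sub _
  have hdiff (t : ι) (g h : Fin N → ℝ) : |(gaussianTruncMean - truncAbs (g ⬝ᵥ x t)) -
      (gaussianTruncMean - truncAbs (h ⬝ᵥ x t))| ≤ 1 := by
    obtain ⟨hg₀, hg₁⟩ := truncAbs_mem_Icc (g ⬝ᵥ x t)
    obtain ⟨hh₀, hh₁⟩ := truncAbs_mem_Icc (h ⬝ᵥ x t)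
    rw [sub_sub_sub_cancel_left, abs_sub_le_iff]
    constructor <;> linarith
  have hmean : ∫ Φ, ⨆ t, ∑ i, (gaussianTruncMean - truncAbs (Φ i ⬝ᵥ x t)) ∂stdGaussianMatrix m N ≤
      gaussianTruncMean * m / 4 := by
    have hwidth := integral_iSup_sum_integral_comp_sub_le_mul_gaussianWidth
      (isBounded_of_forall_l2Norm_eq_one hT) hx lipschitzWith_truncAbs m
    simp only [integral_truncAbs_dotProduct (hT _ (hx _))] at hwidth
    exact hwidth.trans (mul_sqrt_mul_le_of_div_sq_mul_sq_le gaussianTruncMean_pos m.cast_nonneg hm)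
  calc (stdGaussianMatrix m N).real {Φ | ∃ t, ∑ i, |Φ i ⬝ᵥ x t| < gaussianTruncMean / 2 * m}
      ≤ (stdGaussianMatrix m N).real {Φ |
          ∫ Ψ, ⨆ t, ∑ i, (gaussianTruncMean - truncAbs (Ψ i ⬝ᵥ x t)) ∂stdGaussianMatrix m N +
            gaussianTruncMean / 4 * m ≤
          ⨆ t, ∑ i, (gaussianTruncMean - truncAbs (Φ i ⬝ᵥ x t))} := by
        refine measureReal_mono ?_
        rintro Φ ⟨t, ht⟩
        have htrunc : ∑ i, truncAbs (Φ i ⬝ᵥ x t) ≤ ∑ i, |Φ i ⬝ᵥ x t| :=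
          sum_le_sum fun i _ => truncAbs_le_abs _
        have hle : ∑ i, (gaussianTruncMean - truncAbs (Φ i ⬝ᵥ x t)) ≤
            ⨆ t, ∑ i, (gaussianTruncMean - truncAbs (Φ i ⬝ᵥ x t)) :=
          le_ciSup (f := fun t => ∑ i, (gaussianTruncMean - truncAbs (Φ i ⬝ᵥ x t)))
            (Set.finite_range _).bddAbove t
        rw [sum_sub_distrib, Fin.sum_const, nsmul_eq_mul] at hle
        rw [Set.mem_ofPred_eq]
        linarith
    _ ≤ Real.exp (-(2 * (gaussianTruncMean / 4) ^ 2 * m)) :=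
        measureReal_integral_iSup_sum_add_mul_le_le hmeas hdiff m (by
          have := gaussianTruncMean_pos; positivity)
    _ = Real.exp (-(gaussianTruncMean ^ 2 / 8 * m)) := by
        ring_nf

end LowerTail

section Compactness

lemma measure_biUnion_le_of_forall_finset_subset {X ι : Type*} [TopologicalSpace X]
    [MeasurableSpace X] {μ : Measure X} [OpensMeasurableSpace X] [μ.Regular] {U : ι → Set X}
    (hU : ∀ t, IsOpen (U t)) {T : Set ι} {ε : ℝ≥0∞}
    (h : ∀ D : Finset ι, ↑D ⊆ T → μ (⋃ t ∈ D, U t) ≤ ε) : μ (⋃ t ∈ T, U t) ≤ ε := by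
  rw [(isOpen_biUnion fun t _ => hU t).measure_eq_iSup_isCompact]
  refine iSup₂_le fun K hKU => iSup_le fun hK => ?_
  obtain ⟨D, hDT, hD, hKD⟩ := hK.elim_finite_subcover_image (fun t _ => hU t) hKU
  lift D to Finset ι using hD
  exact (measure_mono hKD).trans (h D hDT)

variable {N m : ℕ} {T : Set (Fin N → ℝ)}

lemma isOpen_sum_abs_dotProduct_lt (x : Fin N → ℝ) (a : ℝ) :
    IsOpen {Φ : Fin m → Fin N → ℝ | ∑ i, |Φ i ⬝ᵥ x| < a} :=
  isOpen_lt (by fun_prop) continuous_const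

theorem stdGaussianMatrix_biUnion_sum_abs_dotProduct_lt_le (hT : ∀ x ∈ T, l2Norm x = 1)
    (hm : 64 / gaussianTruncMean ^ 2 * gaussianWidth T ^ 2 ≤ m) :
    stdGaussianMatrix m N (⋃ x ∈ T, {Φ | ∑ i, |Φ i ⬝ᵥ x| < gaussianTruncMean / 2 * m}) ≤
      ENNReal.ofReal (Real.exp (-(gaussianTruncMean ^ 2 / 8 * m))) := by
  refine measure_biUnion_le_of_forall_finset_subset
    (fun x => isOpen_sum_abs_dotProduct_lt x _) fun D hDT => ?_
  rcases D.eq_empty_or_nonempty with rfl | hD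
  · simp
  have := hD.to_subtype
  have hbound := measureReal_exists_sum_abs_dotProduct_lt_le (x := ((↑) : D → Fin N → ℝ)) hT
    (fun x => hDT x.2) hm
  rw [← ofReal_measureReal (measure_ne_top _ _)]
  refine ENNReal.ofReal_le_ofReal (le_of_eq_of_le ?_ hbound)
  congr 1
  ext Φ
  simp

end Compactness

section RobustWidth

variable {N m : ℕ}

lemma l1Norm_smul (a : ℝ) (x : Fin N → ℝ) : l1Norm (a • x) = |a| * l1Norm x := by
  simp only [l1Norm, Pi.smul_apply, smul_eq_mul, abs_mul, mul_sum]

lemma l2Norm_smul (a : ℝ) (x : Fin N → ℝ) : l2Norm (a • x) = |a| * l2Norm x := by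
  simp only [l2Norm, Pi.smul_apply, smul_eq_mul, mul_pow, ← mul_sum]
  rw [Real.sqrt_mul (sq_nonneg a), Real.sqrt_sq_eq_abs]

lemma l1Norm_le_rpow_mul_lpNorm {p : ℝ} (hp : 1 ≤ p) (u : Fin m → ℝ) :
    l1Norm u ≤ (m : ℝ) ^ (1 - 1 / p) * _root_.lpNorm p u := by
  have hp₀ : 0 < p := one_pos.trans_le hp
  have hl1 : 0 ≤ l1Norm u := sum_nonneg fun _ _ => abs_nonneg _
  have hpow : l1Norm u ^ p ≤ (m : ℝ) ^ (p - 1) * ∑ i, |u i| ^ p := by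
    simpa [l1Norm] using Real.rpow_sum_le_const_mul_sum_rpow univ u hp
  have hroot := Real.rpow_le_rpow (by positivity) hpow (one_div_pos.2 hp₀).le
  rwa [Real.mul_rpow (by positivity) (by positivity), ← Real.rpow_mul hl1,
    ← Real.rpow_mul m.cast_nonneg, mul_one_div_cancel hp₀.ne', Real.rpow_one, sub_mul,
    mul_one_div_cancel hp₀.ne', one_mul] at hroot

lemma mul_rpow_one_div_le_lpNorm {p b : ℝ} (hp : 1 ≤ p) {u : Fin m → ℝ} (h : b * m ≤ l1Norm u) :
    b * (m : ℝ) ^ (1 / p) ≤ _root_.lpNorm p u := by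
  rcases m.eq_zero_or_pos with rfl | hm
  · have hp₀ : p ≠ 0 := (one_pos.trans_le hp).ne'
    simp [_root_.lpNorm, hp₀]
  · have hm₀ : (0 : ℝ) < m := Nat.cast_pos.2 hm
    have hsplit : (m : ℝ) ^ (1 - 1 / p) * (m : ℝ) ^ (1 / p) = m := by
      rw [← Real.rpow_add hm₀, sub_add_cancel, Real.rpow_one]
    refine le_of_mul_le_mul_left ?_ (Real.rpow_pos_of_pos hm₀ (1 - 1 / p))
    calc (m : ℝ) ^ (1 - 1 / p) * (b * (m : ℝ) ^ (1 / p))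
        = b * m := by rw [mul_left_comm, hsplit]
      _ ≤ l1Norm u := h
      _ ≤ (m : ℝ) ^ (1 - 1 / p) * _root_.lpNorm p u := l1Norm_le_rpow_mul_lpNorm hp u

/-- The part of the Euclidean unit sphere in the `ℓ1` ball of radius `ρ⁻¹`, the set whose Gaussian
width governs the robust width property. -/
def l1SphereCap (N : ℕ) (ρ : ℝ) : Set (Fin N → ℝ) := {x | l2Norm x = 1 ∧ l1Norm x ≤ ρ⁻¹}

/-- The `(p, ρ, α)`-robust width property over the `ℓ1` ball of the matrix with rows `Φ i`. -/
def HasRobustWidth (p ρ α : ℝ) (Φ : Fin m → Fin N → ℝ) : Prop :=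
  ∀ x, _root_.lpNorm p (fun i => Φ i ⬝ᵥ x) < α * l2Norm x → l2Norm x ≤ ρ * l1Norm x

lemma inv_l2Norm_smul_mem_l1SphereCap {ρ : ℝ} (hρ : 0 < ρ) {x : Fin N → ℝ} (hx₀ : 0 < l2Norm x)
    (hx : ρ * l1Norm x ≤ l2Norm x) : (l2Norm x)⁻¹ • x ∈ l1SphereCap N ρ := by
  refine ⟨?_, ?_⟩
  · rw [l2Norm_smul, abs_of_pos (inv_pos.2 hx₀), inv_mul_cancel₀ hx₀.ne']
  · rwa [l1Norm_smul, abs_of_pos (inv_pos.2 hx₀), inv_mul_le_iff₀ hx₀, ← div_eq_mul_inv,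
      le_div_iff₀' hρ]

theorem hasRobustWidth_of_forall_mem_l1SphereCap {p ρ a : ℝ} (hp : 1 ≤ p) (hρ : 0 < ρ)
    {Φ : Fin m → Fin N → ℝ} (h : ∀ x ∈ l1SphereCap N ρ, a * m ≤ ∑ i, |Φ i ⬝ᵥ x|) :
    HasRobustWidth p ρ (a * (m : ℝ) ^ (1 / p)) Φ := by
  intro x
  contrapose!
  intro hx
  have hl1 : 0 ≤ l1Norm x := sum_nonneg fun _ _ => abs_nonneg _
  have hl2 : 0 < l2Norm x := (mul_nonneg hρ.le hl1).trans_lt hx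
  have hrows := h _ (inv_l2Norm_smul_mem_l1SphereCap hρ hl2 hx.le)
  simp only [dotProduct_smul, smul_eq_mul, abs_mul, abs_of_pos (inv_pos.2 hl2), ← mul_sum,
    le_inv_mul_iff₀ hl2] at hrows
  calc a * (m : ℝ) ^ (1 / p) * l2Norm x = l2Norm x * a * (m : ℝ) ^ (1 / p) := by ring
    _ ≤ _root_.lpNorm p (fun i => Φ i ⬝ᵥ x) :=
      mul_rpow_one_div_le_lpNorm hp (by rwa [l1Norm, mul_assoc])

end RobustWidth

/-- Theorem 4: there are absolute constants c₀, c₁, c₂ > 0 such that if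
m ≥ c₀ w(T)² with T = ρ⁻¹B_{ℓ1} ∩ S^{N−1}, then an m × N standard Gaussian matrix
satisfies the (p, ρ, c₁ m^{1/p})-robust width property over B_{ℓ1} with probability
at least 1 − 2e^{−c₂ m}. -/
theorem gaussian_rwp :
    ∃ c₀ c₁ c₂ : ℝ, 0 < c₀ ∧ 0 < c₁ ∧ 0 < c₂ ∧
      ∀ (N m : ℕ), 0 < N → 0 < m → ∀ ρ : ℝ, 0 < ρ → ∀ p : ℝ, 1 ≤ p →
        c₀ * (gaussianWidth {x : Fin N → ℝ | l2Norm x = 1 ∧ l1Norm x ≤ ρ⁻¹}) ^ 2 ≤ m →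
        ENNReal.ofReal (1 - 2 * Real.exp (-(c₂ * m))) ≤
          stdGaussianMatrix m N
            {Φ : Fin m → Fin N → ℝ | ∀ x : Fin N → ℝ,
              lpNorm p (fun i => ∑ j, Φ i j * x j) < c₁ * (m : ℝ) ^ (1 / p) * l2Norm x →
              l2Norm x ≤ ρ * l1Norm x} := by
  have hc := gaussianTruncMean_pos
  refine ⟨64 / gaussianTruncMean ^ 2, gaussianTruncMean / 2, gaussianTruncMean ^ 2 / 8,
    by positivity, by positivity, by positivity, fun N m _ _ ρ hρ p hp hm => ?_⟩
  let bad : Set (Fin m → Fin N → ℝ) :=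
    ⋃ x ∈ l1SphereCap N ρ, {Φ | ∑ i, |Φ i ⬝ᵥ x| < gaussianTruncMean / 2 * m}
  have hbad : IsOpen bad := isOpen_biUnion fun x _ => isOpen_sum_abs_dotProduct_lt x _
  calc ENNReal.ofReal (1 - 2 * Real.exp (-(gaussianTruncMean ^ 2 / 8 * m)))
      ≤ ENNReal.ofReal (1 - Real.exp (-(gaussianTruncMean ^ 2 / 8 * m))) :=
        ENNReal.ofReal_le_ofReal (by linarith [Real.exp_pos (-(gaussianTruncMean ^ 2 / 8 * m))])
    _ ≤ stdGaussianMatrix m N badᶜ := by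
        rw [prob_compl_eq_one_sub hbad.measurableSet, ENNReal.ofReal_sub _ (Real.exp_nonneg _),
          ENNReal.ofReal_one]
        exact tsub_le_tsub_left
          (stdGaussianMatrix_biUnion_sum_abs_dotProduct_lt_le (fun x hx => hx.1) hm) 1
    _ ≤ stdGaussianMatrix m N {Φ | HasRobustWidth p ρ (gaussianTruncMean / 2 * m ^ (1 / p)) Φ} :=
        measure_mono fun Φ hΦ => hasRobustWidth_of_forall_mem_l1SphereCap hp hρ fun x hx =>
          not_lt.1 fun hlt => hΦ (Set.mem_biUnion hx hlt)
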